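/- Let γ : [0,s] → ℝ³ be a 1-constrained arc for which there exists a sphere S of radius 1 centered at a point on the negative z-axis with γ(0), γ(s) ∈ S and some point of the image of γ lying strictly above S. Then the diameter of the image of γ, i.e. sup over pairs t,t' ∈ [0,s] of ‖γ(t) − γ(t')‖, is at least 2. -/

import Mathlib

open Set Metric

noncomputable section

/-- ℝ³ as a Euclidean space. -/
abbrev E3 : Type := EuclideanSpace ℝ (Fin 3)

/-- `γ : [0,s] → ℝ³` is a κ-constrained curve: arclength-parametrized
(unit speed), `C¹` and piecewise `C²`, with `‖γ''(t)‖ ≤ κ` wherever the second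
derivative is defined (i.e. away from a finite set of break points). -/
structure IsKConstrained (κ s : ℝ) (γ : ℝ → E3) : Prop where
  s_pos : 0 < s
  contDiff : ContDiffOn ℝ 1 γ (Icc 0 s)
  unitSpeed : ∀ t ∈ Icc 0 s, ‖derivWithin γ (Icc 0 s) t‖ = 1
  piecewiseC2 : ∃ F : Finset ℝ, ∀ t ∈ Icc 0 s, t ∉ F →
    ∃ d : E3, HasDerivWithinAt (fun u => derivWithin γ (Icc 0 s) u) d (Icc 0 s) t ∧ ‖d‖ ≤ κ

/-- A 1-constrained arc: an embedded κ-constrained curve with κ = 1 and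
distinct endpoints. -/
def IsOneConstrainedArc (s : ℝ) (γ : ℝ → E3) : Prop :=
  IsKConstrained 1 s γ ∧ InjOn γ (Icc 0 s) ∧ γ 0 ≠ γ s

/-- A point `p` lies (strictly) above the radius-1 sphere centered at `c`:
the vertical line through `p` meets the sphere, and the z-coordinate of `p`
strictly exceeds that of the corresponding (upper) point of the sphere;
in particular `p` lies outside the sphere. -/
def AboveSphere (c p : E3) : Prop :=
  (p 0 - c 0) ^ 2 + (p 1 - c 1) ^ 2 ≤ 1 ∧
  c 2 + Real.sqrt (1 - ((p 0 - c 0) ^ 2 + (p 1 - c 1) ^ 2)) < p 2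


theorem aux_mono (f f' : ℝ → ℝ) (F : Finset ℝ) : ∀ a b : ℝ, a ≤ b → ContinuousOn f (Icc a b) →
    (∀ x ∈ Ioo a b, x ∉ F → HasDerivAt f (f' x) x ∧ 0 ≤ f' x) → f a ≤ f b := by
  induction F using Finset.induction_on with
  | empty =>
    intro a b hab hc hd
    refine monotoneOn_of_hasDerivWithinAt_nonneg (f' := f') (convex_Icc a b) hc ?_ ?_
      (left_mem_Icc.2 hab) (right_mem_Icc.2 hab) hab
    · intro x hx
      rw [interior_Icc] at hx
      exact (hd x hx (by simp)).1.hasDerivWithinAt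
    · intro x hx
      rw [interior_Icc] at hx
      exact (hd x hx (by simp)).2
  | insert m F hm ih =>
    intro a b hab hc hd
    by_cases h : m ∈ Ioo a b
    · have h1 := ih a m h.1.le (hc.mono (Icc_subset_Icc_right h.2.le)) (fun x hx hxF =>
        hd x ⟨hx.1, hx.2.trans h.2⟩ (by simp [hxF, hx.2.ne]))
      have h2 := ih m b h.2.le (hc.mono (Icc_subset_Icc_left h.1.le)) (fun x hx hxF =>
        hd x ⟨h.1.trans hx.1, hx.2⟩ (by simp [hxF, hx.1.ne']))
      exact h1.trans h2
    · refine ih a b hab hc (fun x hx hxF => hd x hx ?_)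
      have : x ≠ m := by rintro rfl; exact h hx
      simp [hxF, this]

section
variable {E : Type*} [NormedAddCommGroup E] [InnerProductSpace ℝ E]

theorem aux_lip (T : ℝ → E) (s : ℝ) (hc : ContinuousOn T (Icc 0 s)) (F : Finset ℝ)
    (hd : ∀ t ∈ Icc 0 s, t ∉ F → ∃ d : E, HasDerivWithinAt T d (Icc 0 s) t ∧ ‖d‖ ≤ 1)
    (a b : ℝ) (ha : 0 ≤ a) (hab : a ≤ b) (hb : b ≤ s) : ‖T b - T a‖ ≤ b - a := by
  have key : ∀ v : E, ‖v‖ ≤ 1 → inner ℝ v (T b - T a) ≤ b - a := by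
    intro v hv
    have hsub : Icc a b ⊆ Icc 0 s := Icc_subset_Icc ha hb
    have hc' := hc.mono hsub
    have := aux_mono (fun t => t - inner ℝ v (T t)) (fun t => 1 - inner ℝ v (deriv T t)) F a b hab
      (by fun_prop) (by
        intro x hx hxF
        obtain ⟨d, hd1, hd2⟩ := hd x (hsub (Ioo_subset_Icc_self hx)) hxF
        have hd3 : HasDerivAt T d x := hd1.hasDerivAt
          (Icc_mem_nhds (ha.trans_lt hx.1) (hx.2.trans_le hb))
        have h4 := (hasDerivAt_const x v).inner ℝ hd3
        rw [hd3.deriv]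
        refine ⟨?_, ?_⟩
        · simp only [inner_zero_left, add_zero] at h4
          exact (hasDerivAt_id' x).fun_sub h4
        · have := real_inner_le_norm v d
          have : ‖v‖ * ‖d‖ ≤ 1 := by nlinarith [norm_nonneg v, norm_nonneg d]
          linarith)
    simp only [inner_sub_right] at this ⊢
    linarith
  by_cases h : ‖T b - T a‖ = 0
  · rw [h]; linarith
  have := key (‖T b - T a‖⁻¹ • (T b - T a)) (by rw [norm_smul, norm_inv, norm_norm]; field_simp; rfl)
  rw [real_inner_smul_left, real_inner_self_eq_norm_sq] at this
  field_simp at this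
  exact this

open InnerProductGeometry Real

theorem aux_angle_small (x y : E) (hx : ‖x‖ = 1) (hy : ‖y‖ = 1) :
    angle x y ≤ ‖x - y‖ + ‖x - y‖ ^ 3 := by
  have h0 := angle_nonneg x y
  have hpi := angle_le_pi x y
  set θ := angle x y with hθ
  have hch : ‖x - y‖ = 2 * sin (θ / 2) := by
    have h1 : ‖x - y‖ ^ 2 = (2 * sin (θ / 2)) ^ 2 := by
      have hc : cos θ = inner ℝ x y := by rw [hθ, cos_angle, hx, hy]; simp
      have h2 : cos θ = 1 - 2 * sin (θ / 2) ^ 2 := by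
        have := Real.cos_two_mul (θ / 2)
        have h3 := Real.sin_sq_add_cos_sq (θ / 2)
        rw [mul_div_cancel₀ θ two_ne_zero] at this
        linarith
      rw [@norm_sub_sq ℝ, hx, hy]
      simp only [RCLike.re_to_real]
      rw [← hc, h2]; ring
    have h3 : 0 ≤ 2 * sin (θ / 2) := by
      have := sin_nonneg_of_nonneg_of_le_pi (x := θ / 2) (by linarith) (by linarith)
      linarith
    exact (pow_left_inj₀ (norm_nonneg _) h3 two_ne_zero).1 h1
  rw [hch]
  set w := sin (θ / 2)
  have h4 : 2 / π * (θ / 2) ≤ w := mul_le_sin (by linarith) (by linarith)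
  have h5 : θ / 2 - (θ / 2) ^ 3 / 6 ≤ w := by
    rcases h0.eq_or_lt with h | h
    · simp [w, ← h]
    · exact (sin_gt_sub_cube (by linarith)).le
  have hw : θ / 2 ≤ 2 * w := by
    have : 2 / π * (θ / 2) ≥ 1 / 2 * (θ / 2) := by
      apply mul_le_mul_of_nonneg_right _ (by linarith)
      rw [div_le_div_iff₀ (by norm_num) pi_pos]
      linarith [pi_le_four]
    linarith
  have h6 : (θ / 2) ^ 3 ≤ (2 * w) ^ 3 := pow_le_pow_left₀ (by linarith) hw 3
  have : 0 ≤ w := by linarith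
  have : 0 ≤ w ^ 3 := by positivity
  nlinarith

theorem aux_angle (T : ℝ → E) (L : ℝ) (hL : 0 ≤ L) (hu : ∀ t ∈ Icc 0 L, ‖T t‖ = 1)
    (hlip : ∀ a b, 0 ≤ a → a ≤ b → b ≤ L → ‖T b - T a‖ ≤ b - a) :
    angle (T 0) (T L) ≤ L := by
  have step : ∀ n : ℕ, ∀ k : ℕ, k ≤ n + 1 →
      angle (T 0) (T (k * (L / (n + 1)))) ≤ k * (L / (n + 1) + (L / (n + 1)) ^ 3) := by
    intro n k
    have hδ : 0 ≤ L / ((n : ℝ) + 1) := by positivity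
    have hnδ : ((n : ℝ) + 1) * (L / (n + 1)) = L := by field_simp
    set δ := L / ((n : ℝ) + 1)
    induction k with
    | zero =>
      intro _
      have : T 0 ≠ 0 := by
        intro h; have := hu 0 ⟨le_rfl, hL⟩; simp [h] at this
      simp [angle_self this]
    | succ k ih =>
      intro hk
      have ih := ih (by omega)
      have hk' : (k : ℝ) + 1 ≤ n + 1 := by exact_mod_cast hk
      have h1 : (0 : ℝ) ≤ k * δ := by positivity
      have h2 : ((k + 1 : ℕ) : ℝ) * δ = k * δ + δ := by push_cast; ring
      have h3 : k * δ + δ ≤ L := by nlinarith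
      rw [h2]
      have h4 := angle_le_angle_add_angle (T 0) (T (k * δ)) (T (k * δ + δ))
      have h5 := aux_angle_small (T (k * δ)) (T (k * δ + δ)) (hu _ ⟨h1, by linarith⟩)
        (hu _ ⟨by linarith, h3⟩)
      have h6 := hlip (k * δ) (k * δ + δ) h1 (by linarith) h3
      rw [norm_sub_rev, add_sub_cancel_left] at h6
      have h7 := pow_le_pow_left₀ (norm_nonneg _) h6 3
      push_cast
      linarith
  have lim : Filter.Tendsto (fun n : ℕ => L + L ^ 3 * (1 / ((n : ℝ) + 1))) Filter.atTop
      (nhds (L + L ^ 3 * 0)) :=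
    (tendsto_one_div_add_atTop_nhds_zero_nat.const_mul _).const_add _
  rw [mul_zero, add_zero] at lim
  refine ge_of_tendsto' lim (fun n => ?_)
  have h := step n (n + 1) le_rfl
  push_cast at h
  have hn : (0 : ℝ) < n + 1 := by positivity
  rw [mul_div_cancel₀ L hn.ne'] at h
  refine h.trans ?_
  have : ((n : ℝ) + 1) * (L / (n + 1) + (L / (n + 1)) ^ 3) = L + L ^ 3 * (1 / (n + 1)) * (1 / (n + 1)) := by
    field_simp
  rw [this]
  have h1 : 1 / ((n : ℝ) + 1) ≤ 1 := by
    rw [div_le_one hn]; linarith [(Nat.cast_nonneg n : (0 : ℝ) ≤ n)]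
  have h2 : 0 ≤ L ^ 3 * (1 / ((n : ℝ) + 1)) := by positivity
  nlinarith

theorem aux_main (p T : ℝ → E) (L : ℝ) (hL : 0 ≤ L) (hLpi : L ≤ π / 2)
    (hp : ContinuousOn p (Icc 0 L)) (hd : ∀ t ∈ Ioo 0 L, HasDerivAt p (T t) t)
    (hu : ∀ t ∈ Icc 0 L, ‖T t‖ = 1)
    (hlip : ∀ a b, 0 ≤ a → a ≤ b → b ≤ L → ‖T b - T a‖ ≤ b - a)
    (u : E) (hun : ‖u‖ = 1) (hort : inner ℝ u (T 0) = 0) :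
    sin L ≤ inner ℝ (T 0) (p L - p 0) ∧ cos L - 1 ≤ inner ℝ u (p L - p 0) := by
  have h0 := hu 0 ⟨le_rfl, hL⟩
  have hcos : ∀ t ∈ Icc 0 L, cos t ≤ inner ℝ (T 0) (T t) := by
    intro t ht
    have := aux_angle T t ht.1 (fun x hx => hu x ⟨hx.1, hx.2.trans ht.2⟩)
      (fun a b ha hab hb => hlip a b ha hab (hb.trans ht.2))
    have h2 : cos (angle (T 0) (T t)) = inner ℝ (T 0) (T t) := by
      rw [cos_angle, h0, hu t ht]; simp
    rw [← h2]
    exact cos_le_cos_of_nonneg_of_le_pi (angle_nonneg _ _) (by linarith [ht.2, pi_pos]) this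
  have hsin : ∀ t ∈ Icc 0 L, - sin t ≤ inner ℝ u (T t) := by
    intro t ht
    have h1 := hcos t ht
    have hc0 : 0 ≤ cos t := cos_nonneg_of_mem_Icc ⟨by linarith [ht.1, pi_pos], by linarith [ht.2]⟩
    have hs0 : 0 ≤ sin t := sin_nonneg_of_nonneg_of_le_pi ht.1 (by linarith [ht.2, pi_pos])
    set A := inner ℝ (T 0) (T t) with hA
    set B := inner ℝ u (T t) with hB
    have hbes : 0 ≤ ‖T t - A • T 0 - B • u‖ ^ 2 := by positivity
    have : ‖T t - A • T 0 - B • u‖ ^ 2 = 1 - A ^ 2 - B ^ 2 := by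
      rw [← real_inner_self_eq_norm_sq]
      simp only [inner_sub_left, inner_sub_right, real_inner_smul_left, real_inner_smul_right]
      rw [real_inner_comm (T 0) (T t), real_inner_comm u (T t), real_inner_comm u (T 0), hort, ← hA, ← hB]
      simp only [real_inner_self_eq_norm_sq, hu t ht, h0, hun]
      ring
    have h3 := sin_sq_add_cos_sq t
    have : B ^ 2 ≤ sin t ^ 2 := by nlinarith
    exact (abs_le_of_sq_le_sq' this hs0).1
  constructor
  · have := aux_mono (fun t => inner ℝ (T 0) (p t) - sin t)
      (fun t => inner ℝ (T 0) (T t) - cos t) ∅ 0 L hL (by fun_prop) (by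
        intro x hx _
        refine ⟨?_, by linarith [hcos x (Ioo_subset_Icc_self hx)]⟩
        have h4 := (hasDerivAt_const x (T 0)).inner ℝ (hd x hx)
        simp only [inner_zero_left, add_zero] at h4
        exact h4.fun_sub (hasDerivAt_sin x))
    simp only [inner_sub_right, sin_zero] at this ⊢
    linarith
  · have := aux_mono (fun t => inner ℝ u (p t) - cos t)
      (fun t => inner ℝ u (T t) - (- sin t)) ∅ 0 L hL (by fun_prop) (by
        intro x hx _
        refine ⟨?_, by linarith [hsin x (Ioo_subset_Icc_self hx)]⟩
        have h4 := (hasDerivAt_const x u).inner ℝ (hd x hx)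
        simp only [inner_zero_left, add_zero] at h4
        exact h4.fun_sub (hasDerivAt_cos x))
    simp only [inner_sub_right, cos_zero] at this ⊢
    linarith

/-- The conclusion for one side: the curve must be longer than `π/2`, and progresses by 1. -/
theorem aux_side (p T : ℝ → E) (L : ℝ) (hL : 0 ≤ L)
    (hp : ContinuousOn p (Icc 0 L)) (hd : ∀ t ∈ Ioo 0 L, HasDerivAt p (T t) t)
    (hu : ∀ t ∈ Icc 0 L, ‖T t‖ = 1)
    (hlip : ∀ a b, 0 ≤ a → a ≤ b → b ≤ L → ‖T b - T a‖ ≤ b - a)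
    (c u : E) (R : ℝ) (hR : 1 < R) (hun : ‖u‖ = 1) (hort : inner ℝ u (T 0) = 0)
    (hpc : p 0 - c = R • u) (hend : ‖p L - c‖ = 1) :
    π / 2 ≤ L ∧ 1 ≤ inner ℝ (T 0) (p (π / 2) - p 0) := by
  have h0 := hu 0 ⟨le_rfl, hL⟩
  have h1 : π / 2 ≤ L := by
    by_contra hlt
    push Not at hlt
    obtain ⟨ha, hb⟩ := aux_main p T L hL hlt.le hp hd hu hlip u hun hort
    have hc0 : 0 ≤ cos L := cos_nonneg_of_mem_Icc ⟨by linarith [pi_pos], hlt.le⟩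
    have hs0 : 0 ≤ sin L := sin_nonneg_of_nonneg_of_le_pi hL (by linarith [pi_pos])
    set w := p L - p 0
    have hw : p L - c = w + R • u := by rw [← hpc]; simp [w]
    set q := p L - c
    have hA : inner ℝ (T 0) q = inner ℝ (T 0) w := by
      rw [hw, inner_add_right, real_inner_smul_right, real_inner_comm, real_inner_comm u, hort]
      simp [real_inner_comm]
    have hB : inner ℝ u q = inner ℝ u w + R := by
      rw [hw, inner_add_right, real_inner_smul_right, real_inner_self_eq_norm_sq, hun]; ring
    set A := inner ℝ (T 0) q with hA'
    set B := inner ℝ u q with hB'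
    have hbes : 0 ≤ ‖q - A • T 0 - B • u‖ ^ 2 := by positivity
    have : ‖q - A • T 0 - B • u‖ ^ 2 = 1 - A ^ 2 - B ^ 2 := by
      rw [← real_inner_self_eq_norm_sq]
      simp only [inner_sub_left, inner_sub_right, real_inner_smul_left, real_inner_smul_right]
      rw [real_inner_comm (T 0) q, real_inner_comm u q, real_inner_comm u (T 0), hort, ← hA', ← hB']
      simp only [real_inner_self_eq_norm_sq, hend, h0, hun]
      ring
    have h3 := sin_sq_add_cos_sq L
    have h4 : sin L ≤ A := by linarith
    have h5 : cos L + (R - 1) ≤ B := by linarith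
    nlinarith [mul_nonneg hc0 (by linarith : 0 ≤ R - 1), mul_pos (by linarith : 0 < R - 1) (by linarith : 0 < R - 1)]
  refine ⟨h1, ?_⟩
  have := (aux_main p T (π / 2) (by positivity) le_rfl (hp.mono (Icc_subset_Icc_right h1))
    (fun t ht => hd t ⟨ht.1, ht.2.trans_le h1⟩) (fun t ht => hu t ⟨ht.1, ht.2.trans h1⟩)
    (fun a b ha hab hb => hlip a b ha hab (hb.trans h1)) u hun hort).1
  simpa using this
end
/-- A 1-constrained arc whose endpoints lie on a radius-1 sphere
centered on the negative z-axis and which has a point lying strictly above that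
sphere must have diameter at least 2. -/
theorem oneConstrained_arc_above_sphere_diam_ge_two
    (s : ℝ) (γ : ℝ → E3) (c : E3)
    (harc : IsOneConstrainedArc s γ)
    (hc0 : c 0 = 0) (hc1 : c 1 = 0) (hc2 : c 2 < 0)
    (h0 : γ 0 ∈ sphere c 1) (hs : γ s ∈ sphere c 1)
    (habove : ∃ t ∈ Icc 0 s, AboveSphere c (γ t)) :
    2 ≤ Metric.diam (γ '' Icc 0 s) := by
  obtain ⟨⟨hspos, hcd, hunit, F, hF⟩, -, -⟩ := harc
  obtain ⟨t1, ht1, hab1, hab2⟩ := habove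
  rw [mem_sphere, dist_eq_norm] at h0 hs
  have hcont : ContinuousOn γ (Icc 0 s) := hcd.continuousOn
  have hud : UniqueDiffOn ℝ (Icc 0 s) := uniqueDiffOn_Icc hspos
  set T := fun u => derivWithin γ (Icc 0 s) u with hT
  have hTc : ContinuousOn T (Icc 0 s) := hcd.continuousOn_derivWithin hud le_rfl
  have hder : ∀ t ∈ Ioo 0 s, HasDerivAt γ (T t) t := fun t ht =>
    ((hcd.differentiableOn one_ne_zero) t (Ioo_subset_Icc_self ht)).hasDerivWithinAt.hasDerivAt
      (Icc_mem_nhds ht.1 ht.2)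
  have hlip := aux_lip T s hTc F hF
  have hout : 1 < ‖γ t1 - c‖ := by
    have h2 : ‖γ t1 - c‖ ^ 2 = (γ t1 0 - c 0) ^ 2 + (γ t1 1 - c 1) ^ 2 + (γ t1 2 - c 2) ^ 2 := by
      rw [EuclideanSpace.norm_sq_eq, Fin.sum_univ_three]; simp
    have h3 := Real.sqrt_nonneg (1 - ((γ t1 0 - c 0) ^ 2 + (γ t1 1 - c 1) ^ 2))
    have h4 := Real.sq_sqrt (sub_nonneg.2 hab1)
    have : 1 < ‖γ t1 - c‖ ^ 2 := by nlinarith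
    nlinarith [norm_nonneg (γ t1 - c)]
  obtain ⟨t0, ht0, hmax⟩ := isCompact_Icc.exists_isMaxOn (nonempty_Icc.2 hspos.le)
    (show ContinuousOn (fun t => ‖γ t - c‖ ^ 2) (Icc 0 s) by fun_prop)
  have hR : 1 < ‖γ t0 - c‖ := by
    have : ‖γ t1 - c‖ ^ 2 ≤ ‖γ t0 - c‖ ^ 2 := hmax ht1
    exact hout.trans_le (le_of_sq_le_sq this (norm_nonneg _))
  have ht0' : t0 ∈ Ioo 0 s := by
    refine ⟨lt_of_le_of_ne ht0.1 ?_, lt_of_le_of_ne ht0.2 ?_⟩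
    · rintro rfl; linarith
    · rintro rfl; linarith
  have hortho : inner ℝ (γ t0 - c) (T t0) = 0 := by
    have h1 : IsLocalMax (fun t => ‖γ t - c‖ ^ 2) t0 :=
      hmax.isLocalMax (Icc_mem_nhds ht0'.1 ht0'.2)
    have h2 := ((hder t0 ht0').sub_const c).norm_sq
    have := h1.hasDerivAt_eq_zero h2
    linarith
  set R := ‖γ t0 - c‖ with hRdef
  have hR0 : R ≠ 0 := by linarith
  have hun : ‖R⁻¹ • (γ t0 - c)‖ = 1 := by
    rw [norm_smul, norm_inv, ← hRdef, Real.norm_of_nonneg (by linarith)]; field_simp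
  have hRu : γ t0 - c = R • (R⁻¹ • (γ t0 - c)) := by
    rw [smul_smul, mul_inv_cancel₀ hR0, one_smul]
  set u := R⁻¹ • (γ t0 - c) with hu
  have hort : inner ℝ u (T t0) = 0 := by
    rw [hu, real_inner_smul_left, hortho, mul_zero]
  obtain ⟨ha1, ha2⟩ := aux_side (fun τ => γ (t0 + τ)) (fun τ => T (t0 + τ)) (s - t0)
    (by linarith [ht0.2])
    (hcont.comp (by fun_prop) (fun x hx => ⟨by linarith [hx.1, ht0.1], by linarith [hx.2]⟩))
    (fun t ht => (hder (t0 + t) ⟨by linarith [ht.1, ht0.1], by linarith [ht.2]⟩).comp_const_add t0 t)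
    (fun t ht => hunit _ ⟨by linarith [ht.1, ht0.1], by linarith [ht.2]⟩)
    (fun a b ha hab hb => by
      have := hlip (t0 + a) (t0 + b) (by linarith [ht0.1]) (by linarith) (by linarith)
      linarith)
    c u R hR hun (by simpa using hort) (by simpa using hRu) (by simpa using hs)
  obtain ⟨hb1, hb2⟩ := aux_side (fun τ => γ (t0 - τ)) (fun τ => - T (t0 - τ)) t0
    ht0.1
    (hcont.comp (by fun_prop) (fun x hx => ⟨by linarith [hx.2], by linarith [hx.1, ht0.2]⟩))
    (fun t ht => (hder (t0 - t) ⟨by linarith [ht.2], by linarith [ht.1, ht0.2]⟩).comp_const_sub t0 t)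
    (fun t ht => by
      rw [norm_neg]; exact hunit _ ⟨by linarith [ht.2], by linarith [ht.1, ht0.2]⟩)
    (fun a b ha hab hb => by
      have := hlip (t0 - b) (t0 - a) (by linarith) (by linarith) (by linarith [ht0.2])
      rw [neg_sub_neg]
      linarith)
    c u R hR hun (by simpa using hort) (by simpa using hRu) (by simpa using h0)
  simp only [add_zero, sub_zero] at ha2 hb2
  have hpi := Real.pi_pos
  have hin : 2 ≤ inner ℝ (T t0) (γ (t0 + Real.pi / 2) - γ (t0 - Real.pi / 2)) := by
    simp only [inner_sub_right, inner_neg_left] at ha2 hb2 ⊢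
    linarith
  have hcs := real_inner_le_norm (T t0) (γ (t0 + Real.pi / 2) - γ (t0 - Real.pi / 2))
  rw [show ‖T t0‖ = 1 from hunit t0 ht0, one_mul, ← dist_eq_norm] at hcs
  refine (hin.trans hcs).trans (dist_le_diam_of_mem (isCompact_Icc.image_of_continuousOn hcont).isBounded
    (mem_image_of_mem _ ⟨by linarith, by linarith⟩) (mem_image_of_mem _ ⟨by linarith, by linarith⟩))

end
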